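/- Let I = (a,b) be a bounded open interval and p : I → ℝ a bounded Lebesgue-measurable function. Then the closure in the L²(I)-norm of the set of polynomials in p, i.e. of { x ↦ r(p(x)) : r a polynomial with real coefficients }, equals L²(I, σ(p)), the subspace of L²(I) consisting of σ(p)-measurable functions. -/

import Mathlib

/-!
Write `μ` for Lebesgue measure on `(a,b)`. Polynomials in the bounded function `p` are
`σ(p)`-measurable, and `L²(σ(p))` is closed, which gives one inclusion.

For the other one, the null sets added to `σ(p)` change nothing modulo `μ`: every `σ(p)`-measurable
set agrees a.e. with some `p⁻¹(t)`, `t` Borel. By density of simple functions it is therefore enough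
to approximate `h ∘ p` for `h` a multiple of the indicator of `t`. The change of variables
`‖h ∘ p - r ∘ p‖_{L²(μ)} = ‖h - r‖_{L²(p_* μ)}` moves the problem to the finite measure `p_* μ`
on `ℝ`, where bounded continuous functions are dense; since `p_* μ` lives on `[-C, C]`, the
Weierstrass theorem replaces the continuous function by a polynomial `r`.
-/

open MeasureTheory Set

/-- `σ(p)`: the smallest sigma-algebra on `I = (a,b)` (realized on `ℝ` carrying the
measure `volume.restrict (Ioo a b)`) that makes `p` measurable and contains the
(measurable) sets of Lebesgue measure zero. -/
def sigmaP (a b : ℝ) (p : ℝ → ℝ) : MeasurableSpace ℝ :=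
  MeasurableSpace.comap p Real.measurableSpace ⊔
    MeasurableSpace.generateFrom
      {s : Set ℝ | MeasurableSet s ∧ MeasureTheory.volume.restrict (Set.Ioo a b) s = 0}

open scoped ENNReal

/-- Polynomials are dense in `L²(ν)` for a finite Borel measure `ν` carried by `[-C, C]`. -/
lemma exists_polynomial_eLpNorm_sub_le (ν : Measure ℝ) [IsFiniteMeasure ν] (C : ℝ)
    (hC : ∀ᵐ y ∂ν, |y| ≤ C) {h : ℝ → ℝ} (hh : MemLp h 2 ν) {ε : ℝ≥0∞} (hε : ε ≠ 0) :
    ∃ r : Polynomial ℝ, eLpNorm (h - fun y => r.eval y) 2 ν ≤ ε := by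
  obtain ⟨g, hg, hgm⟩ :=
    hh.exists_boundedContinuous_eLpNorm_sub_le (by norm_num) (ENNReal.half_pos hε).ne'
  obtain ⟨δ, hδ, hδε⟩ := ENNReal.exists_nnreal_pos_mul_lt
    (a := ν univ ^ (2 : ℝ≥0∞).toReal⁻¹) (b := ε / 2)
    (by finiteness) (ENNReal.half_pos hε).ne'
  obtain ⟨r, hr⟩ := exists_polynomial_near_of_continuousOn (-C) C g
    g.continuous.continuousOn δ (by exact_mod_cast hδ)
  refine ⟨r, ?_⟩
  have hrm : AEStronglyMeasurable (fun y => r.eval y) ν :=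
    r.continuous.aestronglyMeasurable
  have h2 : eLpNorm ((g : ℝ → ℝ) - fun y => r.eval y) 2 ν ≤ ε / 2 := by
    have hb : ∀ᵐ y ∂ν, ‖((g : ℝ → ℝ) - fun y => r.eval y) y‖ ≤ (δ : ℝ) := by
      filter_upwards [hC] with y hy
      have := (hr y (abs_le.mp hy)).le
      rwa [abs_sub_comm] at this
    refine (eLpNorm_le_of_ae_bound hb).trans ?_
    rw [ENNReal.ofReal_coe_nnreal, mul_comm]
    exact hδε.le
  calc eLpNorm (h - fun y => r.eval y) 2 ν
      = eLpNorm ((h - (g : ℝ → ℝ)) + ((g : ℝ → ℝ) - fun y => r.eval y)) 2 ν := by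
        rw [sub_add_sub_cancel]
    _ ≤ eLpNorm (h - (g : ℝ → ℝ)) 2 ν + eLpNorm ((g : ℝ → ℝ) - fun y => r.eval y) 2 ν :=
        eLpNorm_add_le (hh.1.sub hgm.1) (hgm.1.sub hrm) (by norm_num)
    _ ≤ ε / 2 + ε / 2 := add_le_add hg h2
    _ = ε := ENNReal.add_halves ε

lemma sigmaP_le (a b : ℝ) {p : ℝ → ℝ} (hp : Measurable p) :
    sigmaP a b p ≤ Real.measurableSpace :=
  sup_le hp.comap_le (MeasurableSpace.generateFrom_le fun _ hs => hs.1)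

/-- The null sets adjoined in `σ(p)` are invisible modulo a.e. equality. -/
lemma exists_preimage_ae_eq {a b : ℝ} {p : ℝ → ℝ} {s : Set ℝ}
    (hs : MeasurableSet[sigmaP a b p] s) :
    ∃ t : Set ℝ, MeasurableSet t ∧ s =ᵐ[volume.restrict (Ioo a b)] p ⁻¹' t := by
  have hle : sigmaP a b p ≤ eventuallyMeasurableSpace
      (MeasurableSpace.comap p Real.measurableSpace) (ae (volume.restrict (Ioo a b))) := by
    refine sup_le (le_eventuallyMeasurableSpace (l := ae (volume.restrict (Ioo a b))))
      (MeasurableSpace.generateFrom_le fun s hs => ?_)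
    exact ⟨∅, @MeasurableSet.empty _ (MeasurableSpace.comap p Real.measurableSpace),
      ae_eq_empty.2 hs.2⟩
  obtain ⟨_, ⟨t, ht, rfl⟩, hst⟩ := hle s hs
  exact ⟨t, ht, hst⟩

lemma memLp_polynomial_comp {μ : Measure ℝ} [IsFiniteMeasure μ] {p : ℝ → ℝ}
    (hp : Measurable p) {C : ℝ} (hC : ∀ᵐ x ∂μ, |p x| ≤ C) (r : Polynomial ℝ) :
    MemLp (fun x => r.eval (p x)) 2 μ := by
  obtain ⟨B, hB⟩ := (isCompact_Icc (a := -C) (b := C)).exists_bound_of_continuousOn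
    r.continuous.continuousOn
  refine MemLp.of_bound (r.continuous.measurable.comp hp).aestronglyMeasurable B ?_
  filter_upwards [hC] with x hx using hB _ (abs_le.mp hx)

/-- Any `L²` class of the form `h ∘ p` with `h` Borel is an `L²`-limit of polynomials in `p`. -/
lemma mem_closure_poly_of_ae_eq_comp {μ : Measure ℝ} [IsFiniteMeasure μ] {p : ℝ → ℝ}
    (hp : Measurable p) {C : ℝ} (hC : ∀ᵐ x ∂μ, |p x| ≤ C) {h : ℝ → ℝ} (hh : Measurable h)
    {f : Lp ℝ 2 μ} (hf : (f : ℝ → ℝ) =ᵐ[μ] h ∘ p) :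
    f ∈ closure {f : Lp ℝ 2 μ | ∃ r : Polynomial ℝ,
      (f : ℝ → ℝ) =ᵐ[μ] fun x => r.eval (p x)} := by
  have hhL : MemLp h 2 (μ.map p) :=
    (memLp_map_measure_iff hh.aestronglyMeasurable hp.aemeasurable).2
      ((memLp_congr_ae hf).1 (Lp.memLp f))
  have hC' : ∀ᵐ y ∂(μ.map p), |y| ≤ C :=
    (ae_map_iff hp.aemeasurable (measurableSet_le continuous_abs.measurable measurable_const)).2 hC
  refine EMetric.mem_closure_iff.2 fun ε hε => ?_
  obtain ⟨ε', hε', hlt⟩ := exists_between hε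
  obtain ⟨r, hr⟩ := exists_polynomial_eLpNorm_sub_le (μ.map p) C hC' hhL hε'.ne'
  have hrL := memLp_polynomial_comp hp hC r
  refine ⟨hrL.toLp _, ⟨r, hrL.coeFn_toLp⟩, lt_of_le_of_lt ?_ hlt⟩
  rw [Lp.edist_def, eLpNorm_congr_ae (hf.sub hrL.coeFn_toLp)]
  rwa [eLpNorm_map_measure (hh.sub r.continuous.measurable).aestronglyMeasurable
    hp.aemeasurable] at hr

/-- The closure in `L²((a,b))` of the set of polynomials in `p`,
`{ x ↦ r(p(x)) : r a real polynomial }`, equals `L²((a,b), σ(p))`,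
the subspace of (classes of) `σ(p)`-measurable square-integrable functions. -/
theorem closure_poly_eq_lpMeas (a b : ℝ) (hab : a < b) (p : ℝ → ℝ)
    (hp : Measurable p) (hpbdd : ∃ C : ℝ, ∀ x ∈ Set.Ioo a b, |p x| ≤ C) :
    closure {f : Lp ℝ 2 (volume.restrict (Set.Ioo a b)) |
        ∃ r : Polynomial ℝ,
          (f : ℝ → ℝ) =ᵐ[volume.restrict (Set.Ioo a b)] fun x => r.eval (p x)} =
    (lpMeas ℝ ℝ (sigmaP a b p) 2 (volume.restrict (Set.Ioo a b)) :
      Set (Lp ℝ 2 (volume.restrict (Set.Ioo a b)))) := by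
  obtain ⟨C, hC⟩ := hpbdd
  set μ := volume.restrict (Ioo a b) with hμ
  have hCae : ∀ᵐ x ∂μ, |p x| ≤ C := (ae_restrict_iff' measurableSet_Ioo).2 (.of_forall hC)
  have hm := sigmaP_le a b hp
  apply Subset.antisymm
  · have hcl : IsClosed (lpMeas ℝ ℝ (sigmaP a b p) 2 μ : Set (Lp ℝ 2 μ)) :=
      isClosed_aestronglyMeasurable hm
    refine closure_minimal ?_ hcl
    rintro f ⟨r, hr⟩
    refine mem_lpMeas_iff_aestronglyMeasurable.2 ⟨_, ?_, hr⟩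
    have hpm : Measurable[sigmaP a b p] p := fun s hs =>
      (le_sup_left : MeasurableSpace.comap p Real.measurableSpace ≤ sigmaP a b p) _ ⟨s, hs, rfl⟩
    exact (r.continuous.measurable.comp hpm).stronglyMeasurable
  · intro f hf
    set S := {f : Lp ℝ 2 μ | ∃ r : Polynomial ℝ,
      (f : ℝ → ℝ) =ᵐ[μ] fun x => r.eval (p x)} with hS
    refine Lp.induction_stronglyMeasurable hm (by norm_num) (fun f => f ∈ closure S)
      ?_ ?_ ?_ f (mem_lpMeas_iff_aestronglyMeasurable.1 hf)
    · intro c s hs hμs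
      obtain ⟨t, ht, hst⟩ := exists_preimage_ae_eq hs
      refine mem_closure_poly_of_ae_eq_comp hp hCae
        (measurable_const.indicator ht : Measurable (t.indicator fun _ => c)) ?_
      rw [Lp.simpleFunc.coe_indicatorConst]
      exact indicatorConstLp_coeFn.trans (indicator_ae_eq_of_ae_eq_set hst)
    · intro f g hf hg _ _ _ hfS hgS
      refine map_mem_closure₂ continuous_add hfS hgS ?_
      rintro u ⟨r, hr⟩ v ⟨q, hq⟩
      refine ⟨r + q, (Lp.coeFn_add u v).trans ?_⟩
      filter_upwards [hr, hq] with x hx hy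
      simp [hx, hy]
    · exact isClosed_closure.preimage continuous_subtype_val
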